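/- Let (v₁,w₁), (v₂,w₂), …, (v_k,w_k) be a list of pairs of words over the digit alphabet {1,2}, and let B_i = A(v_i,w_i). Then for every nonempty sequence a₁, a₂, …, a_m of indices in {1,…,k}, with e₁ = (1,0,0,0,0,0) and f₁ = (1,0,0,−1,−1,−1), one has e₁ᵀ·B_{a₁}·B_{a₂}⋯B_{a_m}·f₁ > 0 if and only if the concatenations agree: v_{a₁}v_{a₂}⋯v_{a_m} = w_{a₁}w_{a₂}⋯w_{a_m}. In other words, the positive matrix products characterize exactly the solutions of the Post Correspondence Problem instance (v₁,w₁),…,(v_k,w_k). -/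

import Mathlib

/-!
The matrix `A(v, w)` is, up to signs and scaling of the basis, the symmetric square of the `3 × 3`
matrix of the affine map `(x, y) ↦ (3^|v| x + (v)₃, 3^|w| y + (w)₃)`. Appending words composes these
affine maps, so a product of matrices `A(vᵢ, wᵢ)` is `A(V, W)` for the concatenations `V` and `W`.
Its first row paired with `f₁` gives `1 - ((V)₃ - (W)₃)²`, and this integer is positive exactly
when `(V)₃ = (W)₃`. As no digit is zero, there are no leading zeros, and the numeral determines the
word.
-/

open Matrix

/-- The base-3 value `(v)₃` of a word over the digit alphabet `{1,2}`
(`false` representing the digit `1`, `true` the digit `2`), most significant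
digit first. -/
def val3 (v : List Bool) : ℕ :=
  v.foldl (fun a b => 3 * a + (if b then 2 else 1)) 0

/-- The 6×6 integer matrix `A(v,w)` of Claus. -/
def matA (v w : List Bool) : Matrix (Fin 6) (Fin 6) ℤ :=
  !![1, -2 * (val3 v : ℤ), 2 * (val3 w : ℤ), (val3 v : ℤ)^2, (val3 w : ℤ)^2,
        -2 * (val3 v : ℤ) * (val3 w : ℤ);
     0, 3^v.length, 0, -(val3 v : ℤ) * 3^v.length, 0, (val3 w : ℤ) * 3^v.length;
     0, 0, 3^w.length, 0, (val3 w : ℤ) * 3^w.length, -(val3 v : ℤ) * 3^w.length;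
     0, 0, 0, 3^(2 * v.length), 0, 0;
     0, 0, 0, 0, 3^(2 * w.length), 0;
     0, 0, 0, 0, 0, 3^(v.length + w.length)]

/-- The starting vector `e₁`. -/
def e₁ : Fin 6 → ℤ := ![1, 0, 0, 0, 0, 0]

/-- The ending vector `f₁`. -/
def f₁ : Fin 6 → ℤ := ![1, 0, 0, -1, -1, -1]

/-- The value in `{1, 2}` of a letter of the digit alphabet, in the encoding of `val3`. -/
def digitValue (b : Bool) : ℕ :=
  if b then 2 else 1

lemma digitValue_injective : Function.Injective digitValue := by
  decide

lemma digitValue_lt_three (b : Bool) : digitValue b < 3 := by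
  cases b <;> decide

lemma digitValue_ne_zero (b : Bool) : digitValue b ≠ 0 := by
  cases b <;> decide

-- `Nat.ofDigits` lists the least significant digit first.
lemma val3_eq_ofDigits (v : List Bool) :
    val3 v = Nat.ofDigits 3 (v.reverse.map digitValue) := by
  simp [val3, Nat.ofDigits_eq_foldr, List.foldl_map, digitValue, add_comm]

lemma val3_append (v w : List Bool) :
    val3 (v ++ w) = val3 v * 3 ^ w.length + val3 w := by
  simp only [val3_eq_ofDigits, List.reverse_append, List.map_append, Nat.ofDigits_append,
    List.length_map, List.length_reverse]
  ring

lemma digits_val3 (v : List Bool) : Nat.digits 3 (val3 v) = v.reverse.map digitValue := by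
  rw [val3_eq_ofDigits]
  refine Nat.digits_ofDigits 3 (by norm_num) _
    (List.forall_mem_map.mpr fun b _ => digitValue_lt_three b) fun h => ?_
  obtain ⟨b, -, hb⟩ := List.mem_map.mp (List.getLast_mem h)
  exact hb ▸ digitValue_ne_zero b

lemma val3_injective : Function.Injective val3 := by
  intro v w h
  have h_digits : v.reverse.map digitValue = w.reverse.map digitValue := by
    rw [← digits_val3, ← digits_val3, h]
  exact List.reverse_injective (digitValue_injective.list_map h_digits)

section AffineSymSq

variable {R : Type*} [CommRing R]

/-- The symmetric square of the matrix `!![1, x, y; 0, p, 0; 0, 0, q]` of an affine map with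
diagonal linear part, in the signed and scaled monomials for which `A(v, w)` is the case `x = (v)₃`,
`y = (w)₃`, `p = 3^|v|`, `q = 3^|w|`. -/
def affineSymSq (x y p q : R) : Matrix (Fin 6) (Fin 6) R :=
  !![1, -2 * x, 2 * y, x ^ 2, y ^ 2, -2 * x * y;
     0, p, 0, -x * p, 0, y * p;
     0, 0, q, 0, y * q, -x * q;
     0, 0, 0, p ^ 2, 0, 0;
     0, 0, 0, 0, q ^ 2, 0;
     0, 0, 0, 0, 0, p * q]

lemma affineSymSq_id : affineSymSq (0 : R) 0 1 1 = 1 := by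
  ext i j
  fin_cases i <;> fin_cases j <;> simp [affineSymSq]

lemma affineSymSq_mul (x y p q x' y' p' q' : R) :
    affineSymSq x y p q * affineSymSq x' y' p' q' =
      affineSymSq (x * p' + x') (y * q' + y') (p * p') (q * q') := by
  ext i j
  fin_cases i <;> fin_cases j <;>
    simp [affineSymSq, mul_apply, Fin.sum_univ_succ] <;> ring

end AffineSymSq

lemma matA_eq_affineSymSq (v w : List Bool) :
    matA v w = affineSymSq (val3 v : ℤ) (val3 w) (3 ^ v.length) (3 ^ w.length) := by
  simp only [matA, affineSymSq, pow_add, pow_mul']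

lemma matA_nil : matA [] [] = 1 :=
  (matA_eq_affineSymSq [] []).trans affineSymSq_id

lemma matA_append (v v' w w' : List Bool) :
    matA (v ++ v') (w ++ w') = matA v w * matA v' w' := by
  simp only [matA_eq_affineSymSq, affineSymSq_mul, val3_append, List.length_append, pow_add,
    Nat.cast_add, Nat.cast_mul, Nat.cast_pow, Nat.cast_ofNat]

lemma prod_map_matA {ι : Type*} (P : ι → List Bool × List Bool) (a : List ι) :
    (a.map fun i => matA (P i).1 (P i).2).prod =
      matA (a.map fun i => (P i).1).flatten (a.map fun i => (P i).2).flatten := by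
  induction a with
  | nil => exact matA_nil.symm
  | cons i a ih => simp only [List.map_cons, List.prod_cons, List.flatten_cons, matA_append, ih]

lemma e₁_eq_single : e₁ = Pi.single 0 1 := by
  decide

lemma e₁_dotProduct_matA_mulVec_f₁ (v w : List Bool) :
    e₁ ⬝ᵥ (matA v w *ᵥ f₁) = 1 - ((val3 v : ℤ) - val3 w) ^ 2 := by
  calc e₁ ⬝ᵥ (matA v w *ᵥ f₁)
      = (matA v w).row 0 ⬝ᵥ f₁ := by rw [dotProduct_mulVec, e₁_eq_single, single_one_vecMul]
    _ = 1 + (-(val3 v : ℤ) ^ 2 + (-(val3 w : ℤ) ^ 2 + 2 * val3 v * val3 w)) := by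
        simp [matA, f₁, dotProduct, Fin.sum_univ_succ]
    _ = 1 - ((val3 v : ℤ) - val3 w) ^ 2 := by ring

lemma e₁_dotProduct_matA_mulVec_f₁_pos_iff (v w : List Bool) :
    0 < e₁ ⬝ᵥ (matA v w *ᵥ f₁) ↔ v = w := by
  rw [e₁_dotProduct_matA_mulVec_f₁, sub_pos, sq_lt_one_iff_abs_lt_one, Int.abs_lt_one_iff,
    sub_eq_zero, Nat.cast_inj, val3_injective.eq_iff]

theorem matA_PCP_general {ι : Type*} (P : ι → List Bool × List Bool) (a : List ι) :
    0 < e₁ ⬝ᵥ ((a.map fun i => matA (P i).1 (P i).2).prod *ᵥ f₁)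
      ↔ (a.map fun i => (P i).1).flatten = (a.map fun i => (P i).2).flatten := by
  rw [prod_map_matA, e₁_dotProduct_matA_mulVec_f₁_pos_iff]

/-- For a PCP instance given by word pairs `P i = (v_i, w_i)` over `{1,2}` and
`B_i = A(v_i,w_i)`, a nonempty index sequence `a` satisfies
`e₁ᵀ·B_{a₁}⋯B_{a_m}·f₁ > 0` iff the two concatenations agree, i.e. iff `a`
is a solution of the Post Correspondence Problem instance. -/
theorem matA_PCP (k : ℕ) (P : Fin k → List Bool × List Bool)
    (a : List (Fin k)) (ha : a ≠ []) :
    0 < e₁ ⬝ᵥ ((a.map fun i => matA (P i).1 (P i).2).prod *ᵥ f₁)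
      ↔ (a.map fun i => (P i).1).flatten = (a.map fun i => (P i).2).flatten := by
  exact matA_PCP_general P a
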